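/- Let ι be a nonempty finite index set, let c_c ∈ ℝ, and for each i ∈ ι let c_i, c_i^min, c_i^max ∈ ℝ with c_i^min ≤ c_c ≤ c_i^max. Define for each i the correction factor α_i := (c_i^max − c_c)/(c_i − c_c) if c_i > c_i^max, α_i := 1 if c_i^min ≤ c_i ≤ c_i^max, and α_i := (c_i^min − c_c)/(c_i − c_c) if c_i < c_i^min; and set α := min_{i ∈ ι} α_i. Then: (1) 0 ≤ α ≤ 1; (2) for every i ∈ ι, c_i^min ≤ c_c + α·(c_i − c_c) ≤ c_i^max; and (3) if c_i^min ≤ c_i ≤ c_i^max for all i ∈ ι, then α = 1, so the limited values coincide with the unconstrained values c_i. -/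

import Mathlib

open Finset

/-!
At a single vertex, the limited value `cc + t * (x - cc)` stays between the bounds for every
`t` between `0` and the vertex factor, not only for the factor itself, because the bounds enclose
`cc`. The minimum over the vertices lies in all of these intervals, so it works at every vertex.
-/

/-- The one-vertex limiter: its factor lies in `[0, 1]`, and every nonnegative number not
exceeding it respects the bounds when used as the factor at that vertex. -/
lemma vertex_factor_properties {cc x lo hi : ℝ} (hlo : lo ≤ cc) (hhi : cc ≤ hi) {A : ℝ}
    (hA : A = if hi < x then (hi - cc) / (x - cc)
      else if x < lo then (lo - cc) / (x - cc) else 1) :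
    0 ≤ A ∧ A ≤ 1 ∧
      ∀ t, 0 ≤ t → t ≤ A → lo ≤ cc + t * (x - cc) ∧ cc + t * (x - cc) ≤ hi := by
  split_ifs at hA with h1 h2
  · have hd : 0 < x - cc := by linarith
    subst hA
    refine ⟨div_nonneg (by linarith) hd.le, (div_le_one hd).2 (by linarith), fun t ht hle => ?_⟩
    rw [le_div_iff₀ hd] at hle
    have := mul_nonneg ht hd.le
    constructor <;> linarith
  · have hd : x - cc < 0 := by linarith
    subst hA
    refine ⟨div_nonneg_of_nonpos (by linarith) hd.le,
      (div_le_one_of_neg hd).2 (by linarith), fun t ht hle => ?_⟩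
    rw [le_div_iff_of_neg hd] at hle
    have := mul_nonpos_of_nonneg_of_nonpos ht hd.le
    constructor <;> linarith
  · subst hA
    push Not at h1 h2
    refine ⟨zero_le_one, le_rfl, fun t ht hle => ?_⟩
    -- The limited value is a convex combination of `cc` and `x`, both within the bounds.
    constructor <;> nlinarith

/-- Properties of the vertex-based slope limiter: with bounds `c_i^min ≤ c_c ≤ c_i^max`, the
correction factor `α = min_i α_i` satisfies `0 ≤ α ≤ 1`, the limited reconstruction
`c_c + α (c_i − c_c)` respects the bounds at every vertex, and if the unconstrained values
already respect the bounds then `α = 1`. -/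
theorem vertex_based_limiter_properties {ι : Type*} [Fintype ι] [Nonempty ι]
    (cc : ℝ) (c cmin cmax : ι → ℝ)
    (hb : ∀ i, cmin i ≤ cc ∧ cc ≤ cmax i) :
    let α : ι → ℝ := fun i =>
      if cmax i < c i then (cmax i - cc) / (c i - cc)
      else if c i < cmin i then (cmin i - cc) / (c i - cc)
      else 1
    let a : ℝ := univ.inf' univ_nonempty α
    (0 ≤ a ∧ a ≤ 1) ∧
      (∀ i, cmin i ≤ cc + a * (c i - cc) ∧ cc + a * (c i - cc) ≤ cmax i) ∧
      ((∀ i, cmin i ≤ c i ∧ c i ≤ cmax i) → a = 1) := by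
  intro α a
  have key := fun i =>
    vertex_factor_properties (x := c i) (hb i).1 (hb i).2 (A := α i) rfl
  have ha0 : 0 ≤ a := (le_inf'_iff _ _).2 fun i _ => (key i).1
  have hle : ∀ i, a ≤ α i := fun i => inf'_le α (mem_univ i)
  have ha1 : a ≤ 1 := (hle (Classical.arbitrary ι)).trans (key _).2.1
  refine ⟨⟨ha0, ha1⟩, fun i => (key i).2.2 a ha0 (hle i), fun h => le_antisymm ha1 ?_⟩
  refine (le_inf'_iff _ _).2 fun i _ => ?_
  simp [α, not_lt.2 (h i).1, not_lt.2 (h i).2]
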